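/- Let r₀, d ∈ ℝ³ and let R ≥ 0, D ≥ 0 with D ≤ 2R. If ‖r₀‖₂ ≥ R, ‖r₀ + d‖₂ ≥ R, and ‖d‖₂ ≤ D, then for every t ∈ [0,1] one has ‖r₀ + t d‖₂ ≥ √(R² − D²/4). -/

import Mathlib

/-!
On the segment `t ↦ r₀ + t d`, the squared norm is the linear interpolation of its endpoint values
minus the sag `t (1 - t) ‖d‖²` (Stewart's theorem). The interpolation is at least the smaller
endpoint value, and the sag is at most `‖d‖² / 4`, its value at the midpoint.
-/

section

variable {E : Type*} [SeminormedAddCommGroup E] [InnerProductSpace ℝ E]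

theorem norm_add_smul_sq_real (x v : E) (t : ℝ) :
    ‖x + t • v‖ ^ 2 = (1 - t) * ‖x‖ ^ 2 + t * ‖x + v‖ ^ 2 - t * (1 - t) * ‖v‖ ^ 2 := by
  rw [norm_add_sq_real, norm_add_sq_real, real_inner_smul_right, norm_smul, mul_pow,
    Real.norm_eq_abs, sq_abs]
  ring

theorem min_norm_sq_sub_le_norm_add_smul_sq (x v : E) {t : ℝ} (ht : t ∈ Set.Icc (0 : ℝ) 1) :
    min (‖x‖ ^ 2) (‖x + v‖ ^ 2) - ‖v‖ ^ 2 / 4 ≤ ‖x + t • v‖ ^ 2 := by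
  have interpolation_ge : min (‖x‖ ^ 2) (‖x + v‖ ^ 2) ≤ (1 - t) * ‖x‖ ^ 2 + t * ‖x + v‖ ^ 2 :=
    Convex.min_le_combo _ _ (sub_nonneg.2 ht.2) ht.1 (sub_add_cancel 1 t)
  have weight_le : t * (1 - t) ≤ 1 / 4 := by
    linarith [four_mul_le_sq_add t (1 - t)]
  calc
    min (‖x‖ ^ 2) (‖x + v‖ ^ 2) - ‖v‖ ^ 2 / 4
      = min (‖x‖ ^ 2) (‖x + v‖ ^ 2) - 1 / 4 * ‖v‖ ^ 2 := by ring
    _ ≤ (1 - t) * ‖x‖ ^ 2 + t * ‖x + v‖ ^ 2 - t * (1 - t) * ‖v‖ ^ 2 := by gcongr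
    _ = ‖x + t • v‖ ^ 2 := (norm_add_smul_sq_real x v t).symm

/-- Squared, since `√(R ^ 2 - D ^ 2 / 4)` would truncate a negative radicand to `0`. -/
theorem interpolated_distance_lower_bound_general (r₀ d : E) {R D : ℝ} (hR : 0 ≤ R)
    (h1 : R ≤ ‖r₀‖) (h2 : R ≤ ‖r₀ + d‖) (h3 : ‖d‖ ≤ D) {t : ℝ} (ht : t ∈ Set.Icc (0 : ℝ) 1) :
    R ^ 2 - D ^ 2 / 4 ≤ ‖r₀ + t • d‖ ^ 2 := by
  have endpoints_ge : R ^ 2 ≤ min (‖r₀‖ ^ 2) (‖r₀ + d‖ ^ 2) :=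
    le_min (by gcongr) (by gcongr)
  calc
    R ^ 2 - D ^ 2 / 4 ≤ min (‖r₀‖ ^ 2) (‖r₀ + d‖ ^ 2) - ‖d‖ ^ 2 / 4 := by gcongr
    _ ≤ ‖r₀ + t • d‖ ^ 2 := min_norm_sq_sub_le_norm_add_smul_sq r₀ d ht

end

/-- **Lower bound on the interpolated relative distance over a sampling interval.**
If `‖r₀‖ ≥ R`, `‖r₀ + d‖ ≥ R` and `‖d‖ ≤ D` with `0 ≤ D ≤ 2R`, then for all `t ∈ [0,1]`,
`‖r₀ + t d‖ ≥ √(R² − D²/4)`. -/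
theorem interpolated_distance_lower_bound
    (r₀ d : EuclideanSpace ℝ (Fin 3)) (R D : ℝ) (hR : 0 ≤ R) (hD : 0 ≤ D)
    (hD2R : D ≤ 2 * R) (h1 : R ≤ ‖r₀‖) (h2 : R ≤ ‖r₀ + d‖) (h3 : ‖d‖ ≤ D) :
    ∀ t ∈ Set.Icc (0:ℝ) 1, Real.sqrt (R ^ 2 - D ^ 2 / 4) ≤ ‖r₀ + t • d‖ :=
  fun _ ht ↦ (Real.sqrt_le_left (norm_nonneg _)).2
    (interpolated_distance_lower_bound_general r₀ d hR h1 h2 h3 ht)
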